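/- arXiv:2412.11173 — 3 statements merged into one kernel-verified Lean document; each statement's English description precedes it below -/
import Mathlib

section
/- Let p be an odd prime and let P be a finite p-group possessing a characteristic cyclic subgroup C such that the centralizer of C in P satisfies C_P(C) ≤ C. Then the automorphism group Aut(P) has a normal Sylow p-subgroup. -/
/-!
Restriction to `C` is a homomorphism `Aut(P) → Aut(C)`. An automorphism `f` in its kernel moves
each `x` by `x⁻¹ f(x)`, which lies in `C_P(C) ≤ C` and is therefore fixed by `f`; hence
`fⁿ(x) = x (x⁻¹ f(x))ⁿ`, and the kernel has exponent dividing that of `C`, so it is a `p`-group.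
The preimage of a normal Sylow `p`-subgroup under a homomorphism whose kernel is a `p`-group is
again a normal Sylow `p`-subgroup. When `C` is cyclic, `Aut(C)` is abelian, so all its Sylow
subgroups are normal.
-/

theorem iterate_apply_of_apply_eq_mul {M : Type*} [Monoid M] {f : M →* M} {x c : M}
    (hx : f x = x * c) (hc : f c = c) (n : ℕ) : f^[n] x = x * c ^ n := by
  induction n with
  | zero => simp
  | succ n ih =>
    rw [Function.iterate_succ_apply', ih, map_mul, map_pow, hx, hc, mul_assoc, pow_succ']

theorem exists_sylow_eq_comap_of_normal {p : ℕ} {G H : Type*} [Group G] [Group H] (f : G →* H)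
    (hf : IsPGroup p f.ker) (Q : Sylow p H) [(Q : Subgroup H).Normal] :
    ∃ R : Sylow p G, (R : Subgroup G) = (Q : Subgroup H).comap f := by
  have hcomap : IsPGroup p ((Q : Subgroup H).comap f) := Q.isPGroup'.comap_of_ker_isPGroup f hf
  obtain ⟨R, hR⟩ := hcomap.exists_le_sylow
  have hmap : (R : Subgroup G).map f ≤ Q :=
    sup_eq_left.mp <| Q.is_maximal' (Q.isPGroup'.to_sup_of_normal_left (R.isPGroup'.map f))
      le_sup_left
  exact ⟨R, le_antisymm (Subgroup.map_le_iff_le_comap.mp hmap) hR⟩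

instance isMulCommutative_mulAut {G : Type*} [Group G] [IsCyclic G] :
    IsMulCommutative (MulAut G) := by
  refine ⟨⟨fun f g => MulEquiv.ext fun x => ?_⟩⟩
  obtain ⟨m, hm⟩ := MonoidHom.map_cyclic f.toMonoidHom
  obtain ⟨n, hn⟩ := MonoidHom.map_cyclic g.toMonoidHom
  calc f (g x) = (x ^ n) ^ m := (hm (g x)).trans (congrArg (· ^ m) (hn x))
    _ = (x ^ m) ^ n := zpow_comm x n m
    _ = g (f x) := ((hn (f x)).trans (congrArg (· ^ n) (hm x))).symm

section Characteristic

variable {G : Type*} [Group G] {C : Subgroup G}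

theorem inv_mul_apply_mem_centralizer [C.Normal] {f : G →* G} (hf : ∀ c ∈ C, f c = c) (x : G) :
    x⁻¹ * f x ∈ Subgroup.centralizer (C : Set G) := by
  rw [Subgroup.mem_centralizer_iff]
  intro c hc
  have hconj : f x * c * (f x)⁻¹ = x * c * x⁻¹ := by
    simpa only [map_mul, map_inv, hf c hc] using hf _ (Subgroup.Normal.conj_mem ‹_› c hc x)
  calc c * (x⁻¹ * f x) = x⁻¹ * (x * c * x⁻¹) * f x := by group
    _ = x⁻¹ * (f x * c * (f x)⁻¹) * f x := by rw [hconj]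
    _ = x⁻¹ * f x * c := by group

theorem exponent_fixingSubgroup_mulAut_dvd [C.Normal]
    (hcent : Subgroup.centralizer (C : Set G) ≤ C) :
    Monoid.exponent (fixingSubgroup (MulAut G) (C : Set G)) ∣ Monoid.exponent C := by
  refine Monoid.exponent_dvd_of_forall_pow_eq_one fun ⟨f, hf⟩ =>
    Subtype.ext (MulEquiv.ext fun x => ?_)
  have hfix : ∀ c ∈ C, f c = c := (mem_fixingSubgroup_iff _).mp hf
  have hmem : x⁻¹ * f x ∈ C := hcent (inv_mul_apply_mem_centralizer (f := f.toMonoidHom) hfix x)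
  calc (f ^ Monoid.exponent C) x = f^[Monoid.exponent C] x := (smul_iterate_apply f _ x).symm
    _ = x * (x⁻¹ * f x) ^ Monoid.exponent C :=
        iterate_apply_of_apply_eq_mul (f := f.toMonoidHom) (mul_inv_cancel_left x (f x)).symm
          (hfix _ hmem) _
    _ = x := by rw [Subgroup.pow_exponent_eq_one hmem, mul_one]

theorem ker_mulAut_characteristic (C : Subgroup G) [C.Characteristic] :
    (MulAut.characteristic C).ker = fixingSubgroup (MulAut G) (C : Set G) := by
  ext f
  simp [MonoidHom.mem_ker, mem_fixingSubgroup_iff, MulEquiv.ext_iff, Subtype.ext_iff]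

theorem aut_has_normal_sylow_general {p n : ℕ} [C.Characteristic]
    (hcent : Subgroup.centralizer (C : Set G) ≤ C) (hexp : Monoid.exponent C ∣ p ^ n)
    (hC : ∃ Q : Sylow p (MulAut C), (Q : Subgroup (MulAut C)).Normal) :
    ∃ Q : Sylow p (MulAut G), (Q : Subgroup (MulAut G)).Normal := by
  have hker : IsPGroup p (MulAut.characteristic C).ker := by
    rw [ker_mulAut_characteristic]
    exact .of_exponent_dvd_pow ((exponent_fixingSubgroup_mulAut_dvd hcent).trans hexp)
  obtain ⟨Q, hQ⟩ := hC
  obtain ⟨R, hR⟩ := exists_sylow_eq_comap_of_normal (MulAut.characteristic C) hker Q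
  exact ⟨R, hR ▸ hQ.comap _⟩

end Characteristic

/-- Let `p` be an odd prime and `P` a finite `p`-group with a characteristic
cyclic subgroup `C` such that `C_P(C) ≤ C`.  Then `Aut(P)` has a normal Sylow
`p`-subgroup. -/
theorem aut_has_normal_sylow {p : ℕ} (hp : p.Prime) (hodd : Odd p)
    {P : Type*} [Group P] [Finite P] (hP : IsPGroup p P)
    (C : Subgroup P) (hchar : C.Characteristic) (hcyc : IsCyclic C)
    (hcent : Subgroup.centralizer (C : Set P) ≤ C) :
    ∃ Q : Sylow p (MulAut P), (Q : Subgroup (MulAut P)).Normal := by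
  obtain ⟨n, hn⟩ := (hP.to_subgroup C).exists_exponent_dvd_pow
  exact aut_has_normal_sylow_general hcent hn ⟨default, inferInstance⟩
end

section
/- Let p be a prime and let P be a finite p-group. Then P possesses a characteristic subgroup C with the following properties: (i) C has nilpotency class at most 2 and C/Z(C) is elementary abelian; (ii) [P, C] ≤ Z(C); (iii) C_P(C) ≤ Z(C). -/
/-!
Call `C` precritical if it is characteristic and lies in the preimage `T` of the elements of the
centre of `G ⧸ Z(C)` whose `n`-th power is trivial. Precritical subgroups are closed under unions of
chains, so there is a maximal one. If `C` is precritical and `K` is its centralizer, then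
`C ⊔ (K ⊓ T)` is precritical, because its centre still contains `Z(C)`. Hence for maximal `C` we get
`K ⊓ T ≤ Z(C)`: the normal subgroup `K / Z(C)` of `G ⧸ Z(C)` contains no nontrivial central element
with trivial `n`-th power. Among the powers `x ^ n ^ k` of a nontrivial central `x` in `K / Z(C)`,
the last nontrivial one would be such an element, so `K / Z(C)` meets the centre trivially and, by
nilpotency, is trivial.
-/

section

open Subgroup
open scoped commutatorElement

variable {G : Type*} [Group G] {n : ℕ}

theorem le_upperCentralSeriesStep_iff {H N : Subgroup G} [N.Normal] :
    H ≤ N.upperCentralSeriesStep ↔ ⁅(⊤ : Subgroup G), H⁆ ≤ N := by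
  rw [commutator_comm, commutator_le]
  exact ⟨fun h x hx y _ => h hx y, fun h x hx y => h x hx y (mem_top y)⟩

theorem le_of_inf_upperCentralSeriesStep_le [Group.IsNilpotent G] {K N : Subgroup G}
    [K.Normal] [N.Normal] (h : K ⊓ N.upperCentralSeriesStep ≤ N) : K ≤ N := by
  have inf_le (k : ℕ) : K ⊓ Subgroup.upperCentralSeries G k ≤ N := by
    induction k with
    | zero => simp only [Subgroup.upperCentralSeries_zero, inf_bot_eq, bot_le]
    | succ k ih =>
      rintro x ⟨hxK, hxk⟩
      have commutator_mem (y : G) : ⁅x, y⁆ ∈ K :=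
        commutator_le_left K ⊤ (commutator_mem_commutator hxK (mem_top y))
      exact h ⟨hxK, fun y =>
        ih ⟨commutator_mem y, Subgroup.mem_upperCentralSeries_succ_iff.mp hxk y⟩⟩
  obtain ⟨k, hk⟩ := Group.IsNilpotent.nilpotent G
  simpa only [hk, inf_top_eq] using inf_le k

/-- The preimage in `G` of the subgroup of the centre of `G ⧸ N` formed by the elements whose `n`-th
power is trivial, by analogy with `Subgroup.upperCentralSeriesStep`. -/
def upperCentralTorsionStep (N : Subgroup G) [N.Normal] (n : ℕ) : Subgroup G where
  carrier := {x | x ∈ N.upperCentralSeriesStep ∧ x ^ n ∈ N}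
  one_mem' := ⟨one_mem _, by simp only [one_pow, one_mem]⟩
  mul_mem' {x y} hx hy := by
    refine ⟨mul_mem hx.1 hy.1, ?_⟩
    have hy_center : (y : G ⧸ N) ∈ center (G ⧸ N) := by
      simpa only [Subgroup.upperCentralSeriesStep_eq_comap_center, mem_comap,
        QuotientGroup.mk'_apply] using hy.1
    have hx_pow : (x : G ⧸ N) ^ n = 1 := (QuotientGroup.eq_one_iff (x ^ n)).mpr hx.2
    have hy_pow : (y : G ⧸ N) ^ n = 1 := (QuotientGroup.eq_one_iff (y ^ n)).mpr hy.2
    rw [← QuotientGroup.eq_one_iff, QuotientGroup.mk_pow, QuotientGroup.mk_mul,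
      Commute.mul_pow (mem_center_iff.mp hy_center x), hx_pow, hy_pow, one_mul]
  inv_mem' {x} hx := ⟨inv_mem hx.1, by simpa only [inv_pow, inv_mem_iff] using hx.2⟩

theorem upperCentralTorsionStep_mono {M N : Subgroup G} [M.Normal] [N.Normal] (h : M ≤ N) :
    upperCentralTorsionStep M n ≤ upperCentralTorsionStep N n :=
  fun _ hx => ⟨fun y => h (hx.1 y), h hx.2⟩

instance upperCentralTorsionStep_characteristic (N : Subgroup G) [N.Characteristic] :
    (upperCentralTorsionStep N n).Characteristic := by
  refine characteristic_iff_le_comap.mpr fun ϕ x hx => ⟨?_, ?_⟩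
  · exact characteristic_iff_le_comap.mp
      (inferInstance : N.upperCentralSeriesStep.Characteristic) ϕ hx.1
  · rw [← map_pow]
    exact characteristic_iff_le_comap.mp ‹N.Characteristic› ϕ hx.2

theorem inf_upperCentralSeriesStep_le_of_inf_upperCentralTorsionStep_le (hG : IsPGroup n G)
    {K N : Subgroup G} [N.Normal] (h : K ⊓ upperCentralTorsionStep N n ≤ N) :
    K ⊓ N.upperCentralSeriesStep ≤ N := by
  intro x hx
  obtain ⟨k, hk⟩ := hG x
  replace hk : x ^ n ^ k ∈ N := hk ▸ one_mem N
  induction k with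
  | zero => simpa only [pow_zero, pow_one] using hk
  | succ k ih =>
    have hpow : x ^ n ^ k ∈ K ⊓ N.upperCentralSeriesStep := pow_mem hx _
    rw [pow_succ, pow_mul] at hk
    exact ih (h ⟨hpow.1, hpow.2, hk⟩)

/-- A characteristic subgroup `C` of `G` such that `[G, C] ≤ Z(C)` and `x ^ n ∈ Z(C)` for all
`x ∈ C`; a critical subgroup moreover contains its centralizer. The centre `Z(C)`, as a subgroup of
`G`, is `C ⊓ centralizer C`. -/
structure IsPrecritical (n : ℕ) (C : Subgroup G) : Prop where
  [characteristic : C.Characteristic]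
  le_upperCentralTorsionStep : C ≤ upperCentralTorsionStep (C ⊓ centralizer (C : Set G)) n

namespace IsPrecritical

variable {C : Subgroup G}

theorem commutator_le (hC : IsPrecritical n C) :
    ⁅(⊤ : Subgroup G), C⁆ ≤ C ⊓ centralizer (C : Set G) :=
  have := hC.characteristic
  le_upperCentralSeriesStep_iff.mp fun _ hx => (hC.le_upperCentralTorsionStep hx).1

theorem pow_mem (hC : IsPrecritical n C) {x : G} (hx : x ∈ C) :
    x ^ n ∈ C ⊓ centralizer (C : Set G) :=
  have := hC.characteristic
  (hC.le_upperCentralTorsionStep hx).2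

theorem bot : IsPrecritical n (⊥ : Subgroup G) :=
  ⟨bot_le⟩

theorem sup_centralizer_inf [C.Characteristic] (hC : IsPrecritical n C) :
    IsPrecritical n (C ⊔ centralizer (C : Set G) ⊓
      upperCentralTorsionStep (C ⊓ centralizer (C : Set G)) n) := by
  set K := centralizer (C : Set G)
  set T := upperCentralTorsionStep (C ⊓ K) n
  have center_le_centralizer : C ⊓ K ≤ centralizer ((C ⊔ K ⊓ T : Subgroup G) : Set G) := by
    refine le_centralizer_iff.mpr (sup_le ?_ ?_)
    · exact le_centralizer_iff.mp inf_le_right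
    · exact inf_le_left.trans (centralizer_le inf_le_left)
  have sup_le_T : C ⊔ K ⊓ T ≤ T := sup_le hC.le_upperCentralTorsionStep inf_le_right
  exact ⟨sup_le_T.trans (upperCentralTorsionStep_mono
    (le_inf (inf_le_left.trans le_sup_left) center_le_centralizer))⟩

end IsPrecritical

theorem mem_inf_centralizer_sSup {S : Set (Subgroup G)} (hS : DirectedOn (· ≤ ·) S)
    {C : Subgroup G} (hC : C ∈ S) {z : G}
    (h : ∀ D ∈ S, C ≤ D → z ∈ D ⊓ centralizer (D : Set G)) :
    z ∈ sSup S ⊓ centralizer ((sSup S : Subgroup G) : Set G) := by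
  refine ⟨le_sSup hC (h C hC le_rfl).1, mem_centralizer_iff.mpr fun y hy => ?_⟩
  obtain ⟨D, hD, hyD⟩ := (mem_sSup_of_directedOn ⟨C, hC⟩ hS).mp hy
  obtain ⟨E, hE, hCE, hDE⟩ := hS C hC D hD
  exact mem_centralizer_iff.mp (h E hE hCE).2 y (hDE hyD)

theorem IsPrecritical.sSup {S : Set (Subgroup G)} (hS : DirectedOn (· ≤ ·) S)
    (h : ∀ C ∈ S, IsPrecritical n C) : IsPrecritical n (sSup S) := by
  have := characteristic_sSup fun C hC => (h C hC).characteristic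
  refine ⟨sSup_le fun C hC x hx => ⟨fun y => ?_, ?_⟩⟩
  · refine mem_inf_centralizer_sSup hS hC fun D hD hCD => ?_
    have := (h D hD).characteristic
    exact ((h D hD).le_upperCentralTorsionStep (hCD hx)).1 y
  · exact mem_inf_centralizer_sSup hS hC fun D hD hCD => (h D hD).pow_mem (hCD hx)

variable (G n) in
theorem exists_maximal_isPrecritical : ∃ C : Subgroup G, Maximal (IsPrecritical n) C := by
  obtain ⟨C, -, hC⟩ := zorn_le_nonempty₀ {C : Subgroup G | IsPrecritical n C}
    (fun S hS hchain _ _ => ⟨sSup S, .sSup hchain.directedOn hS, fun _ => le_sSup⟩) ⊥ .bot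
  exact ⟨C, hC⟩

theorem centralizer_le_inf_of_maximal_isPrecritical [Group.IsNilpotent G] (hG : IsPGroup n G)
    {C : Subgroup G} (hC : Maximal (IsPrecritical n) C) :
    centralizer (C : Set G) ≤ C ⊓ centralizer (C : Set G) := by
  have := hC.prop.characteristic
  have inf_le : centralizer (C : Set G) ⊓
      upperCentralTorsionStep (C ⊓ centralizer (C : Set G)) n ≤ C :=
    le_sup_right.trans (hC.le_of_ge hC.prop.sup_centralizer_inf le_sup_left)
  exact le_of_inf_upperCentralSeriesStep_le <|
    inf_upperCentralSeriesStep_le_of_inf_upperCentralTorsionStep_le hG <|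
      le_inf inf_le inf_le_left

theorem exists_critical_subgroup_general [Group.IsNilpotent G] (hG : IsPGroup n G) :
    ∃ C : Subgroup G, C.Characteristic ∧
      ⁅C, C⁆ ≤ C ⊓ centralizer (C : Set G) ∧
      (∀ x ∈ C, x ^ n ∈ C ⊓ centralizer (C : Set G)) ∧
      ⁅(⊤ : Subgroup G), C⁆ ≤ C ⊓ centralizer (C : Set G) ∧
      centralizer (C : Set G) ≤ C ⊓ centralizer (C : Set G) := by
  obtain ⟨C, hC⟩ := exists_maximal_isPrecritical G n
  exact ⟨C, hC.prop.characteristic, (commutator_mono le_top le_rfl).trans hC.prop.commutator_le,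
    fun _ => hC.prop.pow_mem, hC.prop.commutator_le,
    centralizer_le_inf_of_maximal_isPrecritical hG hC⟩

end

/-- Critical subgroup theorem.  A finite `p`-group `P` has a characteristic
subgroup `C` with (i) `C` of class at most 2 and `C/Z(C)` elementary abelian,
(ii) `[P, C] ≤ Z(C)`, (iii) `C_P(C) ≤ Z(C)`.  Here `Z(C)`, viewed inside `P`,
is `C ⊓ centralizer C`. -/
theorem exists_critical_subgroup {p : ℕ} (hp : p.Prime)
    {P : Type*} [Group P] [Finite P] (hP : IsPGroup p P) :
    ∃ C : Subgroup P, C.Characteristic ∧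
      ⁅C, C⁆ ≤ C ⊓ Subgroup.centralizer (C : Set P) ∧
      (∀ x ∈ C, x ^ p ∈ C ⊓ Subgroup.centralizer (C : Set P)) ∧
      ⁅(⊤ : Subgroup P), C⁆ ≤ C ⊓ Subgroup.centralizer (C : Set P) ∧
      Subgroup.centralizer (C : Set P) ≤ C ⊓ Subgroup.centralizer (C : Set P) :=
  have : Fact p.Prime := ⟨hp⟩
  have := hP.isNilpotent
  exists_critical_subgroup_general hP
end

section
/- Let p be an odd prime and let P be a finite p-group. Let D be a characteristic subgroup of P of exponent p such that [D, P] ≤ Z(D) and such that every non-trivial automorphism of P of order coprime to p restricts to a non-trivial automorphism of D. Then for any subgroup A of D that is maximal with respect to inclusion among abelian subgroups of D, we have: A is normal in P, and the subgroup C_{Aut(P)}(A) of all automorphisms of P that fix A elementwise is a p-group. -/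
/-!
If `A ≤ D` contains its own centralizer in `D`, it contains `[D, P]`, and so is normal in `P`. An
automorphism `φ` fixing `A` pointwise moves every `x` by an element `x⁻¹ * φ x` of the centralizer
of `A`. For `x ∈ D` this element lies in `A` and is itself fixed by `φ`, so `φ ^ n x` is `x` times
its `n`-th power. Hence if `n` kills `A`, then `φ ^ n` fixes `D` pointwise, and `C_{Aut(P)}(A)`
inherits being a `p`-group from `C_{Aut(P)}(D)`.
-/

open Subgroup

theorem isPGroup_of_forall_coprime_orderOf {G : Type*} [Group G] {p : ℕ} (hp : p.Prime)
    (htorsion : IsMulTorsion G) (h : ∀ g : G, (orderOf g).Coprime p → g = 1) :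
    IsPGroup p G := by
  intro g
  obtain ⟨k, m, hpm, horder⟩ :=
    Nat.exists_eq_pow_mul_and_not_dvd (htorsion g).orderOf_pos.ne' p hp.ne_one
  have horder_pow : orderOf (g ^ p ^ k) = m := by
    rw [orderOf_pow_of_dvd (pow_ne_zero k hp.ne_zero) (Dvd.intro m horder.symm), horder,
      Nat.mul_div_cancel_left m (pow_pos hp.pos k)]
  exact ⟨k, h _ (horder_pow ▸ (hp.coprime_iff_not_dvd.2 hpm).symm)⟩

theorem isPGroup_fixingSubgroup_of_forall_coprime_orderOf {Γ α : Type*} [Group Γ]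
    [MulAction Γ α] {p : ℕ} (hp : p.Prime) (htorsion : IsMulTorsion Γ) {s : Set α}
    (h : ∀ g : Γ, g ≠ 1 → (orderOf g).Coprime p → ∃ x ∈ s, g • x ≠ x) :
    IsPGroup p (fixingSubgroup Γ s) := by
  refine isPGroup_of_forall_coprime_orderOf hp (htorsion.subgroup _) ?_
  rintro ⟨g, hg⟩ hcoprime
  by_contra hne
  obtain ⟨x, hx, hgx⟩ := h g (fun h_one => hne (Subtype.ext h_one)) (by simpa using hcoprime)
  exact hgx ((mem_fixingSubgroup_iff Γ).1 hg x hx)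

theorem inf_centralizer_le_of_maximal_isMulCommutative {G : Type*} [Group G] {D A : Subgroup G}
    (hA : Maximal (fun B : Subgroup G => B ≤ D ∧ IsMulCommutative B) A) :
    D ⊓ centralizer A ≤ A := by
  rintro d ⟨hdD, hdA⟩
  have : IsMulCommutative A := hA.prop.2
  have hcomm : ∀ x ∈ insert d (A : Set G), ∀ y ∈ insert d (A : Set G), x * y = y * x := by
    rintro x (rfl | hx) y (rfl | hy)
    · rfl
    · exact (hdA y hy).symm
    · exact hdA x hx
    · exact setLike_mul_comm hx hy
  have hclosure : closure (insert d (A : Set G)) ≤ A :=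
    hA.le_of_ge
      ⟨(closure_le D).2 (Set.insert_subset hdD hA.prop.1), isMulCommutative_closure hcomm⟩
      fun a ha => subset_closure (Set.mem_insert_of_mem d ha)
  exact hclosure (subset_closure (Set.mem_insert d _))

theorem pow_smul_eq_mul_pow {M N : Type*} [Monoid M] [Monoid N] [MulDistribMulAction M N]
    {m : M} {x a : N} (hx : m • x = x * a) (ha : m • a = a) (n : ℕ) :
    m ^ n • x = x * a ^ n := by
  induction n with
  | zero => simp
  | succ n ih => rw [pow_succ', mul_smul, ih, smul_mul', smul_pow', hx, ha, mul_assoc, ← pow_succ']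

theorem inv_mul_smul_mem_centralizer {M G : Type*} [Monoid M] [Group G] [MulDistribMulAction M G]
    {A : Subgroup G} [hA : A.Normal] {m : M} (hm : ∀ a ∈ A, m • a = a) (x : G) :
    x⁻¹ * m • x ∈ centralizer (A : Set G) := by
  refine mem_centralizer_iff.2 fun a ha => ?_
  calc a * (x⁻¹ * m • x)
      = x⁻¹ * (x * a * x⁻¹ * m • x) := by group
    _ = x⁻¹ * m • (x * a * x⁻¹ * x) := by
        rw [smul_mul' m (x * a * x⁻¹), hm _ (hA.conj_mem a ha x)]
    _ = x⁻¹ * m • x * a := by rw [inv_mul_cancel_right, smul_mul', hm a ha, mul_assoc]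

theorem isPGroup_fixingSubgroup_of_inf_centralizer_le {Γ G : Type*} [Group Γ] [Group G]
    [MulDistribMulAction Γ G] {p n : ℕ} {D A : Subgroup G} [A.Normal]
    (hD : ∀ g : Γ, ∀ x ∈ D, g • x ∈ D) (hself : D ⊓ centralizer A ≤ A)
    (hexp : ∀ a ∈ A, a ^ p ^ n = 1) (hfix : IsPGroup p (fixingSubgroup Γ (D : Set G))) :
    IsPGroup p (fixingSubgroup Γ (A : Set G)) := by
  rintro ⟨g, hg⟩
  rw [mem_fixingSubgroup_iff] at hg
  have hpow : g ^ p ^ n ∈ fixingSubgroup Γ (D : Set G) := by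
    refine (mem_fixingSubgroup_iff Γ).2 fun x hx => ?_
    have hmem : x⁻¹ * g • x ∈ A :=
      hself ⟨D.mul_mem (D.inv_mem hx) (hD g x hx), inv_mul_smul_mem_centralizer hg x⟩
    rw [pow_smul_eq_mul_pow (mul_inv_cancel_left x (g • x)).symm (hg _ hmem), hexp _ hmem, mul_one]
  obtain ⟨k, hk⟩ := hfix ⟨_, hpow⟩
  refine ⟨n + k, Subtype.ext ?_⟩
  change g ^ p ^ (n + k) = 1
  rw [pow_add, pow_mul]
  exact congrArg Subtype.val hk

theorem maximal_abelian_normal_and_centralizer_pGroup_general {P : Type*} [Group P] {p n : ℕ}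
    {D A : Subgroup P} (hchar : D.Characteristic)
    (hDP : ⁅D, (⊤ : Subgroup P)⁆ ≤ centralizer D)
    (hfix : IsPGroup p (fixingSubgroup (MulAut P) (D : Set P)))
    (hAD : A ≤ D) (hself : D ⊓ centralizer A ≤ A) (hexp : ∀ a ∈ A, a ^ p ^ n = 1)
    {K : Subgroup (MulAut P)} (hK : ∀ φ : MulAut P, φ ∈ K ↔ ∀ a ∈ A, φ a = a) :
    A.Normal ∧ IsPGroup p K := by
  obtain rfl : K = fixingSubgroup (MulAut P) (A : Set P) :=
    Subgroup.ext fun φ => (hK φ).trans (mem_fixingSubgroup_iff (MulAut P)).symm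
  have hnormal : A.Normal := commutator_top_right_le_iff.1 <| calc
    ⁅A, ⊤⁆ ≤ ⁅D, ⊤⁆ := commutator_mono hAD le_rfl
    _ ≤ D ⊓ centralizer D := le_inf (commutator_le_left D ⊤) hDP
    _ ≤ D ⊓ centralizer A := inf_le_inf_left D (centralizer_le hAD)
    _ ≤ A := hself
  exact ⟨hnormal, isPGroup_fixingSubgroup_of_inf_centralizer_le
    (fun φ _ hx => characteristic_iff_le_comap.1 hchar φ hx) hself hexp hfix⟩

/-- Let `p` be an odd prime, `P` a finite `p`-group and `D` a characteristic
subgroup of exponent `p` with `[D, P] ≤ Z(D)` on which every non-trivial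
`p'`-automorphism of `P` acts non-trivially.  Then every maximal abelian
subgroup `A` of `D` is normal in `P`, and `C_{Aut(P)}(A)` is a `p`-group. -/
theorem maximal_abelian_normal_and_centralizer_pGroup {p : ℕ} (hp : p.Prime) (hodd : Odd p)
    {P : Type*} [Group P] [Finite P] (hP : IsPGroup p P)
    (D : Subgroup P) (hchar : D.Characteristic)
    (hexp : ∀ x ∈ D, x ^ p = 1)
    (hDP : ⁅D, (⊤ : Subgroup P)⁆ ≤ D ⊓ Subgroup.centralizer (D : Set P))
    (hfaithful : ∀ φ : MulAut P, φ ≠ 1 → Nat.Coprime (orderOf φ) p → ∃ x ∈ D, φ x ≠ x)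
    (A : Subgroup P) (hAD : A ≤ D)
    (hab : ∀ a ∈ A, ∀ b ∈ A, a * b = b * a)
    (hmax : ∀ B : Subgroup P, B ≤ D → (∀ a ∈ B, ∀ b ∈ B, a * b = b * a) → A ≤ B → B = A)
    (K : Subgroup (MulAut P)) (hK : ∀ φ : MulAut P, φ ∈ K ↔ ∀ a ∈ A, φ a = a) :
    A.Normal ∧ IsPGroup p K := by
  have hmaximal : Maximal (fun B : Subgroup P => B ≤ D ∧ IsMulCommutative B) A :=
    ⟨⟨hAD, .of_setLike_mul_comm hab⟩, fun B ⟨hBD, _⟩ hAB =>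
      (hmax B hBD (fun _ ha _ hb => setLike_mul_comm ha hb) hAB).le⟩
  exact maximal_abelian_normal_and_centralizer_pGroup_general (n := 1) hchar
    (hDP.trans inf_le_right)
    (isPGroup_fixingSubgroup_of_forall_coprime_orderOf hp isMulTorsion_of_finite hfaithful)
    hAD (inf_centralizer_le_of_maximal_isMulCommutative hmaximal)
    (fun a ha => (pow_one p).symm ▸ hexp a (hAD ha)) hK
end
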